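/- Let H be a hierarchical clustering method defined on symmetric networks that satisfies the Symmetric Axiom of Value (B1) and the Axiom of Transformation (A2). Then H is equivalent to single linkage: for every symmetric network (X, A_X), writing u_X = H(X, A_X), it holds that u_X(x,x') = u^SL_X(x,x') = ũ*_X(x,x') for all x, x' ∈ X. -/

import Mathlib

noncomputable section

/-- A dissimilarity function on a node set: nonnegative and zero exactly on the diagonal.
It need not be symmetric nor satisfy the triangle inequality. -/
def IsDissim {X : Type} (A : X → X → ℝ) : Prop :=
  (∀ x x', 0 ≤ A x x') ∧ (∀ x x', A x x' = 0 ↔ x = x')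

/-- A symmetric dissimilarity. -/
def IsSym {X : Type} (A : X → X → ℝ) : Prop := ∀ x x', A x x' = A x' x

/-- An ultrametric: nonnegative, zero exactly on the diagonal, symmetric, and
satisfying the strong triangle inequality. -/
def IsUltrametric {X : Type} (u : X → X → ℝ) : Prop :=
  (∀ x x', 0 ≤ u x x') ∧ (∀ x x', u x x' = 0 ↔ x = x') ∧
    (∀ x x', u x x' = u x' x) ∧
    (∀ x x' x'', u x x'' ≤ max (u x x') (u x' x''))

/-- The cost of the chain `x :: l`: the maximum dissimilarity over consecutive links. -/
def chainCost {X : Type} (A : X → X → ℝ) : X → List X → ℝ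
  | _, [] => 0
  | x, y :: l => max (A x y) (chainCost A y l)

/-- The set of costs of chains from `x` to `x'`. -/
def chainCosts {X : Type} (A : X → X → ℝ) (x x' : X) : Set ℝ :=
  {c | ∃ l : List X, (x :: l).getLast (List.cons_ne_nil x l) = x' ∧ chainCost A x l = c}

/-- The directed minimum chain cost `ũ*_X(x,x')`: minimum cost over all chains from `x` to `x'`. -/
def minChainCost {X : Type} (A : X → X → ℝ) (x x' : X) : ℝ :=
  sInf (chainCosts A x x')

/-- The nonreciprocal ultrametric `u^NR`. -/
def nonrecipUltra {X : Type} (A : X → X → ℝ) (x x' : X) : ℝ :=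
  max (minChainCost A x x') (minChainCost A x' x)

/-- The reciprocal ultrametric `u^R`. -/
def recipUltra {X : Type} (A : X → X → ℝ) (x x' : X) : ℝ :=
  minChainCost (fun a b => max (A a b) (A b a)) x x'

/-- The unilateral ultrametric `u^U`. -/
def uniUltra {X : Type} (A : X → X → ℝ) (x x' : X) : ℝ :=
  minChainCost (fun a b => min (A a b) (A b a)) x x'

/-- The minimum loop cost `mlc(X, A_X)`: minimum cost over loops, i.e. chains from some
node `x` back to itself containing at least one node different from `x`. -/
def mlc {X : Type} (A : X → X → ℝ) : ℝ :=
  sInf {c | ∃ (x : X) (l : List X),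
    (x :: l).getLast (List.cons_ne_nil x l) = x ∧ (∃ y ∈ l, y ≠ x) ∧ chainCost A x l = c}

/-- The separation `sep(X, A_X)`: minimum dissimilarity over pairs of distinct nodes. -/
def sep {X : Type} (A : X → X → ℝ) : ℝ :=
  sInf {c | ∃ x x' : X, x ≠ x' ∧ A x x' = c}

/-- A hierarchical clustering method: assigns to every (finite) network an output
two-variable function on the same node set. -/
abbrev HCMethod := ∀ (X : Type) [Fintype X], (X → X → ℝ) → X → X → ℝ

/-- A hierarchical clustering method outputs an ultrametric on every network. -/
def IsHCMethod (H : HCMethod) : Prop :=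
  ∀ (X : Type) [Fintype X] (A : X → X → ℝ), IsDissim A → IsUltrametric (H X A)

/-- `p, q` are the two (distinct) nodes of a two-node set. -/
def TwoNode {X : Type} (p q : X) : Prop := p ≠ q ∧ ∀ x : X, x = p ∨ x = q

/-- Axiom of Value (A1): on every two-node network the output clusters the two nodes at
the maximum of the two dissimilarities. -/
def AxiomValue (H : HCMethod) : Prop :=
  ∀ (X : Type) [Fintype X] (p q : X), TwoNode p q →
    ∀ A : X → X → ℝ, IsDissim A → H X A p q = max (A p q) (A q p)

/-- Axiom of Transformation (A2): dissimilarity-reducing maps do not increase output values. -/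
def AxiomTransform (H : HCMethod) : Prop :=
  ∀ (X Y : Type) [Fintype X] [Fintype Y] (AX : X → X → ℝ) (AY : Y → Y → ℝ),
    IsDissim AX → IsDissim AY →
    ∀ φ : X → Y, (∀ x x', AY (φ x) (φ x') ≤ AX x x') →
    ∀ x x' : X, H Y AY (φ x) (φ x') ≤ H X AX x x'

/-- The canonical dissimilarity `A_{n,α,β}` on `Fin n`: `α` for `i > j`, `β` for `i < j`,
`0` on the diagonal. -/
def canonDissim (n : ℕ) (α β : ℝ) : Fin n → Fin n → ℝ :=
  fun i j => if i = j then 0 else if j < i then α else β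

/-- Extended Axiom of Value (A1'): on every permuted canonical network `Δ_n(α,β,Π)` the
output ultrametric equals `max(α,β)` off the diagonal. -/
def ExtAxiomValue (H : HCMethod) : Prop :=
  ∀ (n : ℕ) (α β : ℝ), 0 < α → 0 < β → ∀ π : Equiv.Perm (Fin n),
    ∀ i j : Fin n, i ≠ j →
      H (Fin n) (fun i j => canonDissim n α β (π i) (π j)) i j = max α β

/-- Alternative Axiom of Value (A1''): on every two-node network the output clusters the
two nodes at the minimum of the two dissimilarities. -/
def AltAxiomValue (H : HCMethod) : Prop :=
  ∀ (X : Type) [Fintype X] (p q : X), TwoNode p q →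
    ∀ A : X → X → ℝ, IsDissim A → H X A p q = min (A p q) (A q p)

/-- Agnostic Axiom of Value (A1'''): on every two-node network the output value lies
between the minimum and maximum of the two dissimilarities. -/
def AgnAxiomValue (H : HCMethod) : Prop :=
  ∀ (X : Type) [Fintype X] (p q : X), TwoNode p q →
    ∀ A : X → X → ℝ, IsDissim A →
      min (A p q) (A q p) ≤ H X A p q ∧ H X A p q ≤ max (A p q) (A q p)

/-!
Single linkage `minChainCost A` satisfies the strong triangle inequality, and it is the largest
such function below `A` that vanishes on the diagonal. Mapping a two-node network onto a pair
`a, b` shows that the output of the method is below `A`, hence below single linkage. Conversely,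
let `m = minChainCost A x x' > 0`. By the strong triangle inequality, every dissimilarity between
the ball `{y | minChainCost A x y < m}` and its complement is at least `m`, so collapsing these two
sets maps the network onto the two-node network with dissimilarity `m` and separates `x` from `x'`.
-/

section Chains

variable {X : Type} {A : X → X → ℝ} {x y z : X} {c : ℝ}

lemma chainCost_nonneg (A : X → X → ℝ) (x : X) (l : List X) : 0 ≤ chainCost A x l := by
  induction l generalizing x with
  | nil => exact le_rfl
  | cons y l ih => exact (ih y).trans (le_max_right _ _)

lemma chainCost_append (A : X → X → ℝ) (x : X) (l₁ l₂ : List X) :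
    chainCost A x (l₁ ++ l₂) =
      max (chainCost A x l₁) (chainCost A ((x :: l₁).getLast (List.cons_ne_nil x l₁)) l₂) := by
  induction l₁ generalizing x with
  | nil => exact (max_eq_right (chainCost_nonneg A x l₂)).symm
  | cons y l₁ ih =>
    rw [List.cons_append, chainCost, chainCost, ih, max_assoc,
      List.getLast_cons (List.cons_ne_nil y l₁)]

lemma chainCosts_nonempty (A : X → X → ℝ) (x y : X) : (chainCosts A x y).Nonempty :=
  ⟨_, [y], rfl, rfl⟩

lemma zero_mem_lowerBounds_chainCosts (A : X → X → ℝ) (x y : X) :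
    0 ∈ lowerBounds (chainCosts A x y) := by
  rintro _ ⟨l, -, rfl⟩
  exact chainCost_nonneg A x l

lemma minChainCost_nonneg (A : X → X → ℝ) (x y : X) : 0 ≤ minChainCost A x y :=
  le_csInf (chainCosts_nonempty A x y) (zero_mem_lowerBounds_chainCosts A x y)

lemma minChainCost_le_of_mem (hc : c ∈ chainCosts A x y) : minChainCost A x y ≤ c :=
  csInf_le ⟨0, zero_mem_lowerBounds_chainCosts A x y⟩ hc

lemma exists_mem_chainCosts_lt (h : minChainCost A x y < c) : ∃ d ∈ chainCosts A x y, d < c :=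
  exists_lt_of_csInf_lt (chainCosts_nonempty A x y) h

lemma minChainCost_self (A : X → X → ℝ) (x : X) : minChainCost A x x = 0 :=
  (minChainCost_le_of_mem ⟨[], rfl, rfl⟩).antisymm (minChainCost_nonneg A x x)

lemma minChainCost_le (h : 0 ≤ A x y) : minChainCost A x y ≤ A x y :=
  minChainCost_le_of_mem ⟨[y], rfl, max_eq_left h⟩

lemma max_mem_chainCosts {c₁ c₂ : ℝ} (h₁ : c₁ ∈ chainCosts A x y) (h₂ : c₂ ∈ chainCosts A y z) :
    max c₁ c₂ ∈ chainCosts A x z := by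
  obtain ⟨l₁, rfl, rfl⟩ := h₁
  obtain ⟨l₂, rfl, rfl⟩ := h₂
  refine ⟨l₁ ++ l₂, ?_, chainCost_append A x l₁ l₂⟩
  cases l₂ <;> simp [List.getLast_cons]

lemma minChainCost_triangle (A : X → X → ℝ) (x y z : X) :
    minChainCost A x z ≤ max (minChainCost A x y) (minChainCost A y z) := by
  refine le_of_forall_gt fun c hc ↦ ?_
  obtain ⟨hxy, hyz⟩ := max_lt_iff.1 hc
  obtain ⟨c₁, hc₁, hlt₁⟩ := exists_mem_chainCosts_lt hxy
  obtain ⟨c₂, hc₂, hlt₂⟩ := exists_mem_chainCosts_lt hyz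
  exact (minChainCost_le_of_mem (max_mem_chainCosts hc₁ hc₂)).trans_lt (max_lt hlt₁ hlt₂)

section Maximality

variable {u : X → X → ℝ} (hdiag : ∀ a, u a a ≤ 0)
  (htriangle : ∀ a b c, u a c ≤ max (u a b) (u b c)) (hle : ∀ a b, u a b ≤ A a b)

include hdiag htriangle hle

lemma le_chainCost (x : X) (l : List X) :
    u x ((x :: l).getLast (List.cons_ne_nil x l)) ≤ chainCost A x l := by
  induction l generalizing x with
  | nil => exact hdiag x
  | cons y l ih =>
    rw [List.getLast_cons (List.cons_ne_nil y l)]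
    exact (htriangle x y _).trans (max_le_max (hle x y) (ih y))

lemma le_minChainCost (x y : X) : u x y ≤ minChainCost A x y := by
  refine le_csInf (chainCosts_nonempty A x y) ?_
  rintro _ ⟨l, rfl, rfl⟩
  exact le_chainCost hdiag htriangle hle x l

end Maximality

lemma le_of_minChainCost_lt_of_le {a b : X} (hab : 0 ≤ A a b) (ha : minChainCost A x a < c)
    (hb : c ≤ minChainCost A x b) : c ≤ A a b := by
  have hc : c ≤ max (minChainCost A x a) (minChainCost A a b) :=
    hb.trans (minChainCost_triangle A x a b)
  exact ((le_max_iff.1 hc).resolve_left ha.not_ge).trans (minChainCost_le hab)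

end Chains

section UniformDissim

variable {X Y : Type} {A : X → X → ℝ} {α : ℝ}

lemma IsDissim.pos (hA : IsDissim A) {x y : X} (hxy : x ≠ y) : 0 < A x y :=
  (hA.1 x y).lt_of_ne' (mt (hA.2 x y).1 hxy)

lemma IsDissim.self (hA : IsDissim A) (x : X) : A x x = 0 := (hA.2 x x).2 rfl

/-- The dissimilarity equal to `α` between any two distinct nodes. On `Bool` this is the symmetric
two-node network `Δ₂(α, α)`. -/
def uniformDissim [DecidableEq X] (α : ℝ) (x y : X) : ℝ := if x = y then 0 else α

lemma uniformDissim_self [DecidableEq X] (α : ℝ) (x : X) : uniformDissim α x x = 0 := if_pos rfl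

lemma uniformDissim_of_ne [DecidableEq X] (α : ℝ) {x y : X} (h : x ≠ y) :
    uniformDissim α x y = α := if_neg h

lemma isDissim_uniformDissim [DecidableEq X] (hα : 0 < α) :
    IsDissim (uniformDissim α : X → X → ℝ) := by
  constructor <;> intro x y <;> rcases eq_or_ne x y with rfl | hxy
  · exact (uniformDissim_self α x).ge
  · exact hα.le.trans_eq (uniformDissim_of_ne α hxy).symm
  · exact iff_of_true (uniformDissim_self α x) rfl
  · exact iff_of_false ((uniformDissim_of_ne α hxy).trans_ne hα.ne') hxy

lemma isSym_uniformDissim [DecidableEq X] (α : ℝ) : IsSym (uniformDissim α : X → X → ℝ) := by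
  intro x y
  simp only [uniformDissim, eq_comm]

lemma twoNode_true_false : TwoNode true false :=
  ⟨by decide, fun b ↦ b.eq_false_or_eq_true⟩

lemma IsDissim.cond_le_uniformDissim (hA : IsDissim A) (hsym : IsSym A) (a b : X) (s t : Bool) :
    A (cond s a b) (cond t a b) ≤ uniformDissim (A a b) s t := by
  rcases s with _ | _ <;> rcases t with _ | _
  · exact (hA.self b).le
  · exact (hsym b a).le
  · exact le_rfl
  · exact (hA.self a).le

lemma IsDissim.uniformDissim_le [DecidableEq Y] (hA : IsDissim A) {φ : X → Y}
    (hφ : ∀ a b, φ a ≠ φ b → α ≤ A a b) (a b : X) : uniformDissim α (φ a) (φ b) ≤ A a b := by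
  rcases eq_or_ne (φ a) (φ b) with hab | hab
  · rw [hab, uniformDissim_self]
    exact hA.1 a b
  · rw [uniformDissim_of_ne α hab]
    exact hφ a b hab

lemma IsDissim.exists_cut (hA : IsDissim A) (hsym : IsSym A) {x y : X}
    (hxy : 0 < minChainCost A x y) :
    ∃ φ : X → Bool, φ x = true ∧ φ y = false ∧
      ∀ a b, uniformDissim (minChainCost A x y) (φ a) (φ b) ≤ A a b := by
  classical
  set m := minChainCost A x y
  refine ⟨fun a ↦ decide (minChainCost A x a < m), ?_, ?_, hA.uniformDissim_le fun a b hab ↦ ?_⟩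
  · simpa only [minChainCost_self, decide_eq_true_eq] using hxy
  · exact decide_eq_false (lt_irrefl m)
  · by_cases ha : minChainCost A x a < m <;> by_cases hb : minChainCost A x b < m
    · simp [ha, hb] at hab
    · exact le_of_minChainCost_lt_of_le (hA.1 a b) ha (not_lt.1 hb)
    · exact (le_of_minChainCost_lt_of_le (hA.1 b a) hb (not_lt.1 ha)).trans_eq (hsym b a)
    · simp [ha, hb] at hab

end UniformDissim

section Methods

variable {𝒞 : Type → Sort*} {H : ∀ X, 𝒞 X → (X → X → ℝ) → X → X → ℝ}

/-- The Symmetric Axiom of Value (B1), on the node set `Bool`, for a method defined on the node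
sets in the class `𝒞`; `hBool` witnesses that `Bool` is in the class. -/
def SymAxiomValueOn (H : ∀ X, 𝒞 X → (X → X → ℝ) → X → X → ℝ) (hBool : 𝒞 Bool) : Prop :=
  ∀ α, 0 < α → H Bool hBool (uniformDissim α) true false = α

/-- The Axiom of Transformation (A2) for a method defined on the symmetric networks whose node set
is in the class `𝒞`, which need not consist of finite sets. -/
def SymAxiomTransformOn (H : ∀ X, 𝒞 X → (X → X → ℝ) → X → X → ℝ) : Prop :=
  ∀ (X Y : Type) (hX : 𝒞 X) (hY : 𝒞 Y) (AX : X → X → ℝ) (AY : Y → Y → ℝ),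
    IsDissim AX → IsSym AX → IsDissim AY → IsSym AY →
    ∀ φ : X → Y, (∀ x x', AY (φ x) (φ x') ≤ AX x x') →
    ∀ x x' : X, H Y hY AY (φ x) (φ x') ≤ H X hX AX x x'

variable {hBool : 𝒞 Bool} {X : Type} {hX : 𝒞 X} {A : X → X → ℝ}

lemma SymAxiomTransformOn.le_dissim (hA2 : SymAxiomTransformOn H) (hB1 : SymAxiomValueOn H hBool)
    (hA : IsDissim A) (hsym : IsSym A) {a b : X} (hab : a ≠ b) : H X hX A a b ≤ A a b :=
  have hpos : 0 < A a b := hA.pos hab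
  calc H X hX A a b
    _ ≤ H Bool hBool (uniformDissim (A a b)) true false :=
      hA2 Bool X hBool hX _ A (isDissim_uniformDissim hpos) (isSym_uniformDissim _) hA hsym
        (fun t ↦ cond t a b) (hA.cond_le_uniformDissim hsym a b) true false
    _ = A a b := hB1 _ hpos

lemma SymAxiomTransformOn.nonneg (hA2 : SymAxiomTransformOn H)
    (hdiag : 0 ≤ H Bool hBool (uniformDissim 1) true true)
    (hA : IsDissim A) (hsym : IsSym A) (x y : X) : 0 ≤ H X hX A x y :=
  hdiag.trans <|
    hA2 X Bool hX hBool A _ hA hsym (isDissim_uniformDissim one_pos) (isSym_uniformDissim 1)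
      (fun _ ↦ true) (hA.uniformDissim_le fun _ _ h ↦ absurd rfl h) x y

lemma SymAxiomTransformOn.minChainCost_le_of_pos (hA2 : SymAxiomTransformOn H)
    (hB1 : SymAxiomValueOn H hBool) (hA : IsDissim A) (hsym : IsSym A) {x y : X}
    (hxy : 0 < minChainCost A x y) : minChainCost A x y ≤ H X hX A x y := by
  obtain ⟨φ, hφx, hφy, hφ⟩ := hA.exists_cut hsym hxy
  calc minChainCost A x y
    _ = H Bool hBool (uniformDissim (minChainCost A x y)) (φ x) (φ y) := by
      rw [hφx, hφy, hB1 _ hxy]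
    _ ≤ H X hX A x y :=
      hA2 X Bool hX hBool A _ hA hsym (isDissim_uniformDissim hxy) (isSym_uniformDissim _)
        φ hφ x y

-- On an infinite network `minChainCost` can vanish at distinct nodes, so there single linkage
-- itself need not be an ultrametric.
theorem single_linkage_unique_general
    (hdiag : ∀ X (hX : 𝒞 X) (A : X → X → ℝ), IsDissim A → IsSym A → ∀ x, H X hX A x x = 0)
    (htriangle : ∀ X (hX : 𝒞 X) (A : X → X → ℝ), IsDissim A → IsSym A →
      ∀ x y z, H X hX A x z ≤ max (H X hX A x y) (H X hX A y z))
    (hB1 : SymAxiomValueOn H hBool) (hA2 : SymAxiomTransformOn H)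
    (hA : IsDissim A) (hsym : IsSym A) (x y : X) :
    H X hX A x y = minChainCost A x y := by
  apply le_antisymm
  · refine le_minChainCost (fun a ↦ (hdiag X hX A hA hsym a).le) (htriangle X hX A hA hsym) ?_ x y
    intro a b
    rcases eq_or_ne a b with rfl | hab
    · rw [hdiag X hX A hA hsym, hA.self]
    · exact hA2.le_dissim hB1 hA hsym hab
  · rcases (minChainCost_nonneg A x y).eq_or_lt with hzero | hpos
    · rw [← hzero]
      have hBool_diag : H Bool hBool (uniformDissim 1) true true = 0 :=
        hdiag Bool hBool _ (isDissim_uniformDissim one_pos) (isSym_uniformDissim 1) true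
      exact hA2.nonneg hBool_diag.ge hA hsym x y
    · exact hA2.minChainCost_le_of_pos hB1 hA hsym hpos

end Methods

/-- On symmetric networks, any method satisfying the Symmetric Axiom of Value
(B1) and the Axiom of Transformation (A2) is single linkage. -/
theorem single_linkage_unique
    (H : HCMethod)
    (hH : ∀ (X : Type) [Fintype X] (A : X → X → ℝ), IsDissim A → IsSym A →
      IsUltrametric (H X A))
    (hB1 : ∀ (X : Type) [Fintype X] (p q : X), TwoNode p q →
      ∀ A : X → X → ℝ, IsDissim A → IsSym A → H X A p q = A p q)
    (hA2 : ∀ (X Y : Type) [Fintype X] [Fintype Y] (AX : X → X → ℝ) (AY : Y → Y → ℝ),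
      IsDissim AX → IsSym AX → IsDissim AY → IsSym AY →
      ∀ φ : X → Y, (∀ x x', AY (φ x) (φ x') ≤ AX x x') →
      ∀ x x' : X, H Y AY (φ x) (φ x') ≤ H X AX x x')
    (X : Type) [Fintype X] (A : X → X → ℝ) (hA : IsDissim A) (hsym : IsSym A)
    (x x' : X) :
    H X A x x' = minChainCost A x x' := by
  have hB1_Bool : SymAxiomValueOn (fun X (_ : Fintype X) ↦ H X) inferInstance := fun α hα ↦
    hB1 Bool true false twoNode_true_false _ (isDissim_uniformDissim hα) (isSym_uniformDissim α)
  exact single_linkage_unique_general (𝒞 := Fintype) (H := fun X _ ↦ H X)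
    (fun X _ A hA hsym x ↦ ((hH X A hA hsym).2.1 x x).2 rfl)
    (fun X _ A hA hsym ↦ (hH X A hA hsym).2.2.2) hB1_Bool hA2 hA hsym x x'
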